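/- For |q|<1, G(q)^4·H(q^2)^2 − H(q)^4·G(q^2)^2 + 4·G(q)^2·H(q)^2·G(q^2)·H(q^2) = (4·(q^{10};q^{10})_∞^4 / (q^5;q^5)_∞^4) · G(q)^3·H(q)^3 / (G(q^2)^2·H(q^2)^2). -/

import Mathlib

/-!
Write `tᵢ = (q ^ i; q ^ 10)_∞ (q ^ (10 - i); q ^ 10)_∞`. Splitting products to the base `q ^ 5`
into two products to the base `q ^ 10` gives `G(q) = 1 / (t₁ t₄)`, `H(q) = 1 / (t₂ t₃)`,
`G(q²) = 1 / t₂`, `H(q²) = 1 / t₄` and `(q⁵; q⁵)_∞² = t₅ (q¹⁰; q¹⁰)_∞²`, so the claim is a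
polynomial relation between `q` and `t₁, …, t₅`. By `modular_relation` it is a combination of

* `t₁ t₃ t₄² + q t₁² t₂ t₄ = t₂² t₃ t₅`,
* `t₁ t₄² t₅ + q t₁ t₂² t₃ = t₂ t₃² t₄`,
* `t₂ t₄³ + q² t₁³ t₃ = t₃³ t₅`,

all three of which are instances of Weierstrass' three-term relation `theta_three_term` for the
theta function `θ(z) = (z; p)_∞ (p / z; p)_∞`, `p = q ^ 10`. That relation holds because, by the
Jacobi triple product (`triple_product`), `θ(x y) θ(x / y)` is up to a factor a 2 by 2 minor
`D(x) C(y) - C(x) D(y)` (`theta_mul_theta`), and such minors satisfy the Plücker relation.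
The triple product itself is the limit of a finite version, `hasSum_coef`, which is proved by
induction.
-/

noncomputable def qp (a q : ℂ) : ℂ := ∏' k : ℕ, (1 - a * q ^ k)

noncomputable def GG (q : ℂ) : ℂ := 1 / (qp q (q ^ 5) * qp (q ^ 4) (q ^ 5))

noncomputable def HH (q : ℂ) : ℂ := 1 / (qp (q ^ 2) (q ^ 5) * qp (q ^ 3) (q ^ 5))

noncomputable def RR (q : ℂ) : ℂ :=
  (qp q (q ^ 5) * qp (q ^ 4) (q ^ 5)) / (qp (q ^ 2) (q ^ 5) * qp (q ^ 3) (q ^ 5))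

noncomputable def phi (q : ℂ) : ℂ := ∑' n : ℤ, q ^ (n.natAbs ^ 2)

noncomputable def psi (q : ℂ) : ℂ := ∑' n : ℕ, q ^ (n * (n + 1) / 2)

open Filter Topology

/-! ### Triangular exponents -/

/-- The triangular exponent `j (j - 1) / 2` (an exact division) for an integer `j`. -/
def tri (j : ℤ) : ℤ := j * (j - 1) / 2

lemma two_mul_tri (j : ℤ) : 2 * tri j = j * (j - 1) :=
  Int.mul_ediv_cancel' (Int.even_mul_pred_self j).two_dvd

lemma tri_succ (j : ℤ) : tri (j + 1) = tri j + j := by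
  have h1 := two_mul_tri j
  have h2 := two_mul_tri (j + 1)
  linarith

lemma tri_neg (j : ℤ) : tri (-j) = tri j + j := by
  have h1 := two_mul_tri j
  have h2 := two_mul_tri (-j)
  linarith

lemma tri_add_tri_sub (i j : ℤ) : tri (i + j) + tri (i - j) = i ^ 2 - i + j ^ 2 := by
  have h1 := two_mul_tri (i + j)
  have h2 := two_mul_tri (i - j)
  linarith

lemma tri_add_one_add_tri_sub (i j : ℤ) :
    tri (i + j + 1) + tri (i - j) = i ^ 2 + (j ^ 2 + j) := by
  have h1 := two_mul_tri (i + j + 1)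
  have h2 := two_mul_tri (i - j)
  linarith

/-! ### Infinite products -/

lemma summable_qp {p : ℂ} (hp : ‖p‖ < 1) (a : ℂ) : Summable fun k : ℕ => ‖-(a * p ^ k)‖ := by
  simp only [norm_neg, norm_mul, norm_pow]
  exact (summable_geometric_of_lt_one (norm_nonneg _) hp).mul_left _

lemma multipliable_qp {p : ℂ} (hp : ‖p‖ < 1) (a : ℂ) :
    Multipliable fun k : ℕ => 1 - a * p ^ k := by
  simpa [sub_eq_add_neg] using
    Complex.multipliable_one_add_of_summable (summable_qp hp a).of_norm

lemma qp_ne_zero {a p : ℂ} (hp : ‖p‖ < 1) (ha : ‖a‖ < 1) : qp a p ≠ 0 := by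
  have h := tprod_one_add_ne_zero_of_summable (f := fun k : ℕ => -(a * p ^ k)) ?_
    (summable_qp hp a)
  · simpa [qp, sub_eq_add_neg] using h
  · intro k hk
    have h1 : a * p ^ k = 1 := by linear_combination -hk
    have h2 : ‖a * p ^ k‖ < 1 := by
      rw [norm_mul, norm_pow]
      exact (mul_le_of_le_one_right (norm_nonneg _)
        (pow_le_one₀ (norm_nonneg _) hp.le)).trans_lt ha
    rw [h1, norm_one] at h2
    exact lt_irrefl _ h2

lemma tendsto_qp {p : ℂ} (hp : ‖p‖ < 1) (a : ℂ) :
    Tendsto (fun n : ℕ => ∏ k ∈ Finset.range n, (1 - a * p ^ k)) atTop (𝓝 (qp a p)) :=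
  (multipliable_qp hp a).tendsto_prod_tprod_nat

/-- Separating the factors of even and odd index. -/
lemma qp_split {p : ℂ} (hp : ‖p‖ < 1) (a : ℂ) :
    qp a p = qp a (p ^ 2) * qp (a * p) (p ^ 2) := by
  have hp2 : ‖p ^ 2‖ < 1 := by
    rw [norm_pow]; exact pow_lt_one₀ (norm_nonneg _) hp two_ne_zero
  have h := tprod_even_mul_odd (f := fun k : ℕ => 1 - a * p ^ k) ?_ ?_
  · rw [qp, ← h, qp, qp]
    congr 1
    · simp [pow_mul]
    · congr 1; ext k; ring
  · simpa [pow_mul] using multipliable_qp hp2 a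
  · convert multipliable_qp hp2 (a * p) using 2; ring

/-! ### The Jacobi triple product -/

/-- The reciprocal `1 / (p; p)_m`, extended by `0` to negative `m`. With this extension the
recurrence `invPoch_sub_one` holds for every integer `m`. -/
noncomputable def invPoch (p : ℂ) (m : ℤ) : ℂ :=
  if 0 ≤ m then (∏ k ∈ Finset.range m.toNat, (1 - p * p ^ k))⁻¹ else 0

lemma one_sub_pow_ne_zero {p : ℂ} (hp : ‖p‖ < 1) (k : ℕ) : 1 - p * p ^ k ≠ 0 := by
  intro h
  have h1 : p ^ (k + 1) = 1 := by linear_combination -h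
  have h2 : ‖p ^ (k + 1)‖ < 1 := by
    rw [norm_pow]; exact pow_lt_one₀ (norm_nonneg _) hp (Nat.succ_ne_zero k)
  rw [h1, norm_one] at h2
  exact lt_irrefl _ h2

lemma invPoch_sub_one {p : ℂ} (hp : ‖p‖ < 1) (m : ℤ) :
    invPoch p (m - 1) = (1 - p ^ m) * invPoch p m := by
  rcases lt_trichotomy m 0 with h | rfl | h
  · rw [invPoch, invPoch, if_neg (by omega), if_neg (by omega), mul_zero]
  · simp [invPoch]
  · obtain ⟨n, rfl⟩ : ∃ n : ℕ, m = n + 1 := ⟨(m - 1).toNat, by omega⟩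
    have h1 : ((n : ℤ) + 1).toNat = n + 1 := by omega
    rw [invPoch, invPoch, if_pos (by omega), if_pos (by omega), add_sub_cancel_right, h1,
      Int.toNat_natCast, Finset.prod_range_succ, mul_inv]
    have h2 := one_sub_pow_ne_zero hp n
    have h3 : p ^ ((n : ℤ) + 1) = p * p ^ n := by
      rw [mul_comm, ← pow_succ]; exact_mod_cast rfl
    rw [h3]
    field_simp

lemma tendsto_invPoch {p : ℂ} (hp : ‖p‖ < 1) (f : ℕ → ℤ) (hf : Tendsto f atTop atTop) :
    Tendsto (fun n => invPoch p (f n)) atTop (𝓝 (qp p p)⁻¹) := by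
  have h1 : Tendsto (fun n => (f n).toNat) atTop atTop := by
    rw [tendsto_atTop] at hf ⊢
    intro b
    filter_upwards [hf b] with n hn
    omega
  have h2 := ((tendsto_qp hp p).inv₀ (qp_ne_zero hp hp)).comp h1
  refine h2.congr' ?_
  filter_upwards [hf.eventually_ge_atTop 0] with n hn
  simp [invPoch, hn]

lemma exists_bound_invPoch {p : ℂ} (hp : ‖p‖ < 1) : ∃ M, 0 ≤ M ∧ ∀ m, ‖invPoch p m‖ ≤ M := by
  obtain ⟨M, hM⟩ := (tendsto_invPoch hp (fun n => (n : ℤ))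
    tendsto_natCast_atTop_atTop).norm.bddAbove_range
  refine ⟨max M 0, le_max_right _ _, fun m => ?_⟩
  by_cases h : 0 ≤ m
  · obtain ⟨n, rfl⟩ := Int.eq_ofNat_of_zero_le h
    exact (hM ⟨n, rfl⟩).trans (le_max_left _ _)
  · simp [invPoch, h]

/-- The coefficient of `z ^ j` in the Laurent polynomial `(z; p)_n (p / z; p)_n`, namely
`(-1) ^ j p ^ (j (j - 1) / 2)` times the Gaussian binomial `[2 n, n + j]`. -/
noncomputable def coef (p : ℂ) (n : ℕ) (j : ℤ) : ℂ :=
  (-1) ^ j * p ^ tri j * (∏ k ∈ Finset.range (2 * n), (1 - p * p ^ k)) *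
    (invPoch p (n - j) * invPoch p (n + j))

lemma coef_succ {p : ℂ} (hp : ‖p‖ < 1) (hp0 : p ≠ 0) (n : ℕ) (j : ℤ) :
    coef p (n + 1) j = (1 + p ^ (2 * n + 1)) * coef p n j - p ^ n * coef p n (j - 1)
      - p ^ (n + 1) * coef p n (j + 1) := by
  have e1 : invPoch p (n - j) = (1 - p ^ ((n : ℤ) + 1 - j)) * invPoch p (n + 1 - j) := by
    rw [← invPoch_sub_one hp]; congr 1; ring
  have e2 : invPoch p (n + j) = (1 - p ^ ((n : ℤ) + 1 + j)) * invPoch p (n + 1 + j) := by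
    rw [← invPoch_sub_one hp]; congr 1; ring
  have e3 : invPoch p (n + (j - 1)) = (1 - p ^ ((n : ℤ) + j)) * invPoch p (n + j) := by
    rw [← invPoch_sub_one hp]; congr 1; ring
  have e4 : invPoch p (n - (j + 1)) = (1 - p ^ ((n : ℤ) - j)) * invPoch p (n - j) := by
    rw [← invPoch_sub_one hp]; congr 1; ring
  have e5 : invPoch p (n - (j - 1)) = invPoch p (n + 1 - j) := by congr 1; ring
  have e6 : invPoch p (n + (j + 1)) = invPoch p (n + 1 + j) := by congr 1; ring
  have t1 : tri (j - 1) = tri j - (j - 1) := by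
    have := tri_succ (j - 1); rw [sub_add_cancel] at this; linarith
  have hm : (-1 : ℂ) ≠ 0 := by norm_num
  unfold coef
  rw [e3, e4, e5, e6, e1, e2, t1, tri_succ, mul_add 2 n 1, mul_one, Finset.prod_range_succ,
    Finset.prod_range_succ]
  push_cast
  simp only [zpow_add₀ hp0, zpow_sub₀ hp0, zpow_add₀ hm, zpow_sub₀ hm, zpow_natCast, zpow_one]
  have hj : p ^ j ≠ 0 := zpow_ne_zero _ hp0
  generalize p ^ j = w at *
  generalize p ^ tri j = T
  generalize (-1 : ℂ) ^ j = S
  generalize invPoch p (n + 1 - j) = A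
  generalize invPoch p (n + 1 + j) = B
  simp only [pow_succ, pow_mul', pow_zero]
  generalize p ^ n = a
  generalize (∏ k ∈ Finset.range (2 * n), (1 - p * p ^ k)) = P
  field_simp
  ring

/-- The finite form of the Jacobi triple product. -/
lemma hasSum_coef {p : ℂ} (hp : ‖p‖ < 1) (hp0 : p ≠ 0) {z : ℂ} (hz : z ≠ 0) (n : ℕ) :
    HasSum (fun j : ℤ => coef p n j * z ^ j)
      ((∏ k ∈ Finset.range n, (1 - z * p ^ k)) * ∏ k ∈ Finset.range n, (1 - p / z * p ^ k)) := by
  induction n with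
  | zero =>
    have h : ∀ j : ℤ, j ≠ 0 → coef p 0 j * z ^ j = 0 := by
      intro j hj
      rcases lt_or_gt_of_ne hj with h | h
      · have : invPoch p (0 + j) = 0 := by rw [invPoch, if_neg (by omega)]
        simp only [coef, Nat.cast_zero, this, mul_zero, zero_mul]
      · have : invPoch p (0 - j) = 0 := by rw [invPoch, if_neg (by omega)]
        simp only [coef, Nat.cast_zero, this, mul_zero, zero_mul]
    convert hasSum_single 0 h using 1
    simp [coef, invPoch, tri]
  | succ n ih =>
    have h1 := (Equiv.addRight (-1 : ℤ)).hasSum_iff.2 ih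
    have h2 := (Equiv.addRight (1 : ℤ)).hasSum_iff.2 ih
    convert! ((ih.mul_left (1 + p ^ (2 * n + 1))).sub (h1.mul_left (p ^ n * z))).sub
      (h2.mul_left (p ^ (n + 1) * z⁻¹)) using 1
    · funext j
      simp only [Function.comp, Equiv.coe_addRight, coef_succ hp hp0, ← sub_eq_add_neg,
        zpow_add₀ hz, zpow_sub₀ hz, zpow_one]
      field_simp
    · rw [Finset.prod_range_succ, Finset.prod_range_succ]
      field_simp
      ring

/-- Absolute convergence of theta series. -/
lemma summable_theta {p : ℂ} (hp : ‖p‖ < 1) (hp0 : p ≠ 0) {z : ℂ} (hz : z ≠ 0) :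
    Summable fun j : ℤ => ‖p ^ tri j * z ^ j‖ := by
  have key : ∀ w : ℂ, w ≠ 0 → Summable fun n : ℕ => ‖p ^ tri n * w ^ (n : ℤ)‖ := by
    intro w hw
    refine summable_of_ratio_test_tendsto_lt_one (l := 0) zero_lt_one ?_ ?_
    · exact Eventually.of_forall fun n =>
        norm_ne_zero_iff.2 (mul_ne_zero (zpow_ne_zero _ hp0) (zpow_ne_zero _ hw))
    · have h := (tendsto_pow_atTop_nhds_zero_of_lt_one (norm_nonneg p) hp).mul_const ‖w‖
      rw [zero_mul] at h
      refine h.congr fun n => ?_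
      rw [norm_norm, norm_norm, ← norm_div]
      push_cast
      rw [tri_succ, zpow_add₀ hp0, zpow_add₀ hw, zpow_one, ← norm_pow, ← norm_mul, zpow_natCast]
      congr 1
      have h1 : p ^ tri n ≠ 0 := zpow_ne_zero _ hp0
      have h2 : w ^ (n : ℤ) ≠ 0 := zpow_ne_zero _ hw
      field_simp
  refine Summable.of_nat_of_neg (key z hz) ?_
  refine (key (p / z) (div_ne_zero hp0 hz)).congr fun n => ?_
  rw [tri_neg, zpow_add₀ hp0, div_zpow, zpow_neg]
  congr 1
  field_simp

/-- The general term of the theta series `∑ (-1) ^ j p ^ (j (j - 1) / 2) z ^ j`. -/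
noncomputable def thetaTerm (p z : ℂ) (j : ℤ) : ℂ := (-1) ^ j * p ^ tri j * z ^ j

/-- The modified theta function `(z; p)_∞ (p / z; p)_∞`. -/
noncomputable def theta (p z : ℂ) : ℂ := qp z p * qp (p / z) p

lemma norm_thetaTerm (p z : ℂ) (j : ℤ) : ‖thetaTerm p z j‖ = ‖p ^ tri j * z ^ j‖ := by
  simp [thetaTerm]

/-- The Jacobi triple product, as the limit of its finite form by dominated convergence. -/
lemma triple_product {p : ℂ} (hp : ‖p‖ < 1) (hp0 : p ≠ 0) {z : ℂ} (hz : z ≠ 0) :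
    qp p p * theta p z = ∑' j : ℤ, thetaTerm p z j := by
  have hE := qp_ne_zero hp hp
  obtain ⟨M, hM0, hM⟩ := exists_bound_invPoch hp
  obtain ⟨K, hK⟩ := (tendsto_qp hp p).norm.bddAbove_range
  have hK : ∀ n, ‖∏ k ∈ Finset.range n, (1 - p * p ^ k)‖ ≤ K := fun n => hK ⟨n, rfl⟩
  have h2n : Tendsto (fun n : ℕ => 2 * n) atTop atTop :=
    tendsto_id.const_mul_atTop' two_pos
  have lim : Tendsto (fun n : ℕ => ∑' j : ℤ, coef p n j * z ^ j) atTop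
      (𝓝 (∑' j : ℤ, (qp p p)⁻¹ * thetaTerm p z j)) := by
    refine tendsto_tsum_of_dominated_convergence
      (bound := fun j => K * (M * M) * ‖p ^ tri j * z ^ j‖)
      ((summable_theta hp hp0 hz).mul_left _) (fun j => ?_) (Eventually.of_forall fun n j => ?_)
    · have a1 := tendsto_invPoch hp (fun n : ℕ => (n : ℤ) - j)
        (tendsto_atTop_add_const_right _ (-j) tendsto_natCast_atTop_atTop)
      have a2 := tendsto_invPoch hp (fun n : ℕ => (n : ℤ) + j)
        (tendsto_atTop_add_const_right _ j tendsto_natCast_atTop_atTop)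
      have a3 := ((tendsto_qp hp p).comp h2n).const_mul ((-1) ^ j * p ^ tri j)
      convert! (a3.mul (a1.mul a2)).mul_const (z ^ j) using 2
      rw [thetaTerm]
      field_simp
    · have : ‖coef p n j * z ^ j‖ = ‖∏ k ∈ Finset.range (2 * n), (1 - p * p ^ k)‖ *
          (‖invPoch p (n - j)‖ * ‖invPoch p (n + j)‖) * ‖p ^ tri j * z ^ j‖ := by
        simp only [coef, norm_mul, norm_zpow, norm_neg, norm_one, one_zpow]
        ring
      rw [this]
      have hK0 : 0 ≤ K := (norm_nonneg _).trans (hK 0)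
      gcongr
      · exact hK _
      · exact hM _
      · exact hM _
  simp only [(hasSum_coef hp hp0 hz _).tsum_eq] at lim
  have := tendsto_nhds_unique lim ((tendsto_qp hp z).mul (tendsto_qp hp (p / z)))
  rw [tsum_mul_left] at this
  rw [theta, ← this]
  field_simp

/-! ### The three-term relation -/

/-- The even theta series `∑ p ^ (n ^ 2) y ^ (2 n)`. -/
noncomputable def thetaEven (p y : ℂ) : ℂ := ∑' n : ℤ, p ^ (n ^ 2) * y ^ (2 * n)

/-- The theta series `∑ p ^ (n ^ 2 + n) y ^ (2 n + 1)` over the odd powers of `y`. -/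
noncomputable def thetaOdd (p y : ℂ) : ℂ := ∑' n : ℤ, p ^ (n ^ 2 + n) * y ^ (2 * n + 1)

lemma tsum_int_even_odd {f : ℤ → ℂ} (hf : Summable f) :
    ∑' n, f n = ∑' n, f (2 * n) + ∑' n, f (2 * n + 1) := by
  have i1 : Function.Injective fun n : ℤ => 2 * n := mul_right_injective₀ two_ne_zero
  have i2 : Function.Injective fun n : ℤ => 2 * n + 1 := (add_left_injective 1).comp i1
  refine HasSum.tsum_eq ((i1.hasSum_range_iff.2 (hf.comp_injective i1).hasSum).add_isCompl ?_
    (i2.hasSum_range_iff.2 (hf.comp_injective i2).hasSum))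
  convert! Int.isCompl_even_odd using 1
  · ext n; simp [even_iff_exists_two_mul]
  · ext n; simp [Odd, @eq_comm _ n]

/-- Multiplying the two theta series and sorting the double sum by the parity of the exponent
of `x` separates the variables and leaves a 2 by 2 determinant. -/
lemma theta_mul_theta {p : ℂ} (hp : ‖p‖ < 1) (hp0 : p ≠ 0) {x y : ℂ} (hx : x ≠ 0) (hy : y ≠ 0) :
    qp p p ^ 2 * (theta p (x * y) * theta p (x / y)) =
      x * (thetaOdd p x * thetaEven p y - thetaEven p x * thetaOdd p y) := by
  have hxy := mul_ne_zero hx hy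
  have hxy' := div_ne_zero hx hy
  set f := thetaTerm p (x * y) with hf
  set g := thetaTerm p (x / y) with hg
  have sf : Summable fun j => ‖f j‖ := by
    simpa only [hf, norm_thetaTerm] using summable_theta hp hp0 hxy
  have sg : Summable fun j => ‖g j‖ := by
    simpa only [hg, norm_thetaTerm] using summable_theta hp hp0 hxy'
  have hprod : qp p p ^ 2 * (theta p (x * y) * theta p (x / y)) = (∑' j, f j) * ∑' j, g j := by
    rw [← triple_product hp hp0 hxy, ← triple_product hp hp0 hxy']; ring
  -- `(s, m) ↦ (m, s - m)`: the first coordinate becomes the exponent of `x`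
  let e : ℤ × ℤ ≃ ℤ × ℤ :=
    { toFun := fun t => (t.2, t.1 - t.2)
      invFun := fun t => (t.1 + t.2, t.1)
      left_inv := fun t => by ext <;> simp
      right_inv := fun t => by ext <;> simp }
  have sfg := summable_mul_of_summable_norm sf sg
  have se : Summable fun t : ℤ × ℤ => f t.2 * g (t.1 - t.2) := e.summable_iff.2 sfg
  have h1 : (∑' j, f j) * ∑' j, g j = ∑' s, ∑' m, f m * g (s - m) := by
    rw [tsum_mul_tsum_of_summable_norm sf sg, ← e.tsum_eq, ← se.tsum_prod]
    rfl
  have hm : (-1 : ℂ) ≠ 0 := by norm_num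
  have heven : ∀ i : ℤ, ∑' m, f m * g (2 * i - m) =
      p ^ (i ^ 2 - i) * x ^ (2 * i) * thetaEven p y := by
    intro i
    rw [← (Equiv.addLeft i).tsum_eq, thetaEven, ← tsum_mul_left]
    refine tsum_congr fun j => ?_
    have e1 : 2 * i - (i + j) = i - j := by ring
    have e2 : (-1 : ℂ) ^ (i + j) * (-1) ^ (i - j) = 1 := by
      rw [← zpow_add₀ hm, show i + j + (i - j) = 2 * i by ring, zpow_mul]; norm_num
    have e3 : p ^ tri (i + j) * p ^ tri (i - j) = p ^ (i ^ 2 - i) * p ^ (j ^ 2) := by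
      rw [← zpow_add₀ hp0, ← zpow_add₀ hp0, tri_add_tri_sub]
    have e4 : (x * y) ^ (i + j) * (x / y) ^ (i - j) = x ^ (2 * i) * y ^ (2 * j) := by
      rw [mul_zpow, div_zpow, two_mul, two_mul, zpow_add₀ hx, zpow_add₀ hx, zpow_add₀ hy,
        zpow_add₀ hy, zpow_sub₀ hx, zpow_sub₀ hy]
      field_simp
    simp only [hf, hg, thetaTerm, Equiv.coe_addLeft, e1]
    linear_combination (p ^ tri (i + j) * p ^ tri (i - j)) *
        ((x * y) ^ (i + j) * (x / y) ^ (i - j)) * e2 +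
      ((x * y) ^ (i + j) * (x / y) ^ (i - j)) * e3 + p ^ (i ^ 2 - i) * p ^ (j ^ 2) * e4
  have hodd : ∀ i : ℤ, ∑' m, f m * g (2 * i + 1 - m) =
      -x * (p ^ (i ^ 2) * x ^ (2 * i)) * thetaOdd p y := by
    intro i
    rw [← (Equiv.addLeft (i + 1)).tsum_eq, thetaOdd, ← tsum_mul_left]
    refine tsum_congr fun j => ?_
    have e0 : i + 1 + j = i + j + 1 := by ring
    have e1 : 2 * i + 1 - (i + j + 1) = i - j := by ring
    have e2 : (-1 : ℂ) ^ (i + j + 1) * (-1) ^ (i - j) = -1 := by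
      rw [← zpow_add₀ hm, show i + j + 1 + (i - j) = 2 * i + 1 by ring, zpow_add₀ hm, zpow_mul]
      norm_num
    have e3 : p ^ tri (i + j + 1) * p ^ tri (i - j) = p ^ (i ^ 2) * p ^ (j ^ 2 + j) := by
      rw [← zpow_add₀ hp0, ← zpow_add₀ hp0, tri_add_one_add_tri_sub]
    have e4 : (x * y) ^ (i + j + 1) * (x / y) ^ (i - j) =
        x * x ^ (2 * i) * y ^ (2 * j + 1) := by
      rw [mul_zpow, div_zpow, two_mul, two_mul, zpow_add₀ hx, zpow_add₀ hx, zpow_add₀ hx,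
        zpow_add₀ hy, zpow_add₀ hy, zpow_add₀ hy, zpow_add₀ hy, zpow_sub₀ hx, zpow_sub₀ hy,
        zpow_one, zpow_one]
      field_simp
    simp only [hf, hg, thetaTerm, Equiv.coe_addLeft, e0, e1]
    linear_combination (p ^ tri (i + j + 1) * p ^ tri (i - j)) *
        ((x * y) ^ (i + j + 1) * (x / y) ^ (i - j)) * e2 -
      ((x * y) ^ (i + j + 1) * (x / y) ^ (i - j)) * e3 - p ^ (i ^ 2) * p ^ (j ^ 2 + j) * e4
  have hshift : ∑' i : ℤ, p ^ (i ^ 2 - i) * x ^ (2 * i) = x * thetaOdd p x := by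
    rw [← (Equiv.addRight (1 : ℤ)).tsum_eq, thetaOdd, ← tsum_mul_left]
    refine tsum_congr fun i => ?_
    rw [Equiv.coe_addRight, show (i + 1) ^ 2 - (i + 1) = i ^ 2 + i by ring,
      show 2 * (i + 1) = 2 * i + 1 + 1 by ring, zpow_add₀ hx _ 1, zpow_one]
    ring
  rw [hprod, h1, tsum_int_even_odd se.prod]
  simp only [heven, hodd, tsum_mul_right, tsum_mul_left, hshift]
  rw [thetaEven, thetaEven]
  ring

lemma theta_reflect {p : ℂ} (hp0 : p ≠ 0) (z : ℂ) : theta p (p / z) = theta p z := by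
  rw [theta, theta, div_div_cancel₀ hp0, mul_comm]

/-- Weierstrass' three-term relation (with one of its four variables equal to `1`): by
`theta_mul_theta` it is the Plücker relation between 2 by 2 minors. -/
lemma theta_three_term {p : ℂ} (hp : ‖p‖ < 1) (hp0 : p ≠ 0) {a b c : ℂ} (ha : a ≠ 0)
    (hb : b ≠ 0) (hc : c ≠ 0) :
    b * (theta p (a * b) * theta p (a / b) * theta p c ^ 2) +
        a * (theta p (c * a) * theta p (c / a) * theta p b ^ 2) =
      b * (theta p a ^ 2 * (theta p (c * b) * theta p (c / b))) := by
  have hE := qp_ne_zero hp hp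
  have hab := theta_mul_theta hp hp0 ha hb
  have hca := theta_mul_theta hp hp0 hc ha
  have hcb := theta_mul_theta hp hp0 hc hb
  have ha1 := theta_mul_theta hp hp0 ha one_ne_zero
  have hb1 := theta_mul_theta hp hp0 hb one_ne_zero
  have hc1 := theta_mul_theta hp hp0 hc one_ne_zero
  rw [mul_one, div_one, ← sq] at ha1 hb1 hc1
  apply mul_left_cancel₀ (pow_ne_zero 4 hE)
  generalize theta p (a * b) * theta p (a / b) = Tab at *
  generalize theta p (c * a) * theta p (c / a) = Tca at *
  generalize theta p (c * b) * theta p (c / b) = Tcb at *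
  calc qp p p ^ 4 * (b * (Tab * theta p c ^ 2) + a * (Tca * theta p b ^ 2))
      = b * ((qp p p ^ 2 * Tab) * (qp p p ^ 2 * theta p c ^ 2)) +
          a * ((qp p p ^ 2 * Tca) * (qp p p ^ 2 * theta p b ^ 2)) := by ring
    _ = b * ((qp p p ^ 2 * theta p a ^ 2) * (qp p p ^ 2 * Tcb)) := by
        rw [hab, hc1, hca, hb1, ha1, hcb]; ring
    _ = _ := by ring

/-! ### The identity between Rogers-Ramanujan functions -/

/-- The algebra behind the identity. Here `tᵢ = theta (q ^ 10) (q ^ i)`; the hypotheses are three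
instances of the three-term relation. -/
lemma modular_relation {q t1 t2 t3 t4 t5 : ℂ}
    (h2 : t1 * t3 * t4 ^ 2 + q * (t1 ^ 2 * t2 * t4) = t2 ^ 2 * t3 * t5)
    (h4 : t1 * t4 ^ 2 * t5 + q * (t1 * t2 ^ 2 * t3) = t2 * t3 ^ 2 * t4)
    (h6 : t2 * t4 ^ 3 + q ^ 2 * (t1 ^ 3 * t3) = t3 ^ 3 * t5) :
    (t2 ^ 6 * t3 ^ 4 - t1 ^ 4 * t4 ^ 6 + 4 * (t1 ^ 2 * t2 ^ 3 * t3 ^ 2 * t4 ^ 3)) * t5 ^ 2 =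
      4 * (t1 * t2 ^ 5 * t3 * t4 ^ 5) := by
  -- the ratio of `v` to `u` is Ramanujan's parameter `k = R(q) R(q ^ 2) ^ 2`
  obtain ⟨u, hu⟩ : ∃ u, u = t3 * t4 := ⟨_, rfl⟩
  obtain ⟨v, hv⟩ : ∃ v, v = q * t1 * t2 := ⟨_, rfl⟩
  have hX : t2 ^ 3 * t3 ^ 2 * t5 = t1 * t2 * t3 * t4 * (u + v) := by
    rw [hu, hv]; linear_combination -(t2 * t3) * h2
  have hY : t1 ^ 2 * t4 ^ 3 * t5 = t1 * t2 * t3 * t4 * (u - v) := by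
    rw [hu, hv]; linear_combination (t1 * t4) * h4
  have hk : t1 * t3 * (u ^ 2 + u * v - v ^ 2) = t2 ^ 3 * t4 ^ 3 := by
    rw [hu, hv]; linear_combination t3 ^ 2 * h2 - t2 ^ 2 * h6
  calc _ = (t2 ^ 3 * t3 ^ 2 * t5) ^ 2 - (t1 ^ 2 * t4 ^ 3 * t5) ^ 2 +
        4 * ((t2 ^ 3 * t3 ^ 2 * t5) * (t1 ^ 2 * t4 ^ 3 * t5)) := by ring
    _ = 4 * (t1 * t2 ^ 2 * t3 * t4 ^ 2) * (t1 * t3 * (u ^ 2 + u * v - v ^ 2)) := by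
        rw [hX, hY]; ring
    _ = _ := by rw [hk]; ring

theorem stmt11 (q : ℂ) (hq : ‖q‖ < 1) :
    GG q ^ 4 * HH (q ^ 2) ^ 2 - HH q ^ 4 * GG (q ^ 2) ^ 2 +
        4 * GG q ^ 2 * HH q ^ 2 * GG (q ^ 2) * HH (q ^ 2) =
      4 * qp (q ^ 10) (q ^ 10) ^ 4 / qp (q ^ 5) (q ^ 5) ^ 4 *
        (GG q ^ 3 * HH q ^ 3 / (GG (q ^ 2) ^ 2 * HH (q ^ 2) ^ 2)) := by
  rcases eq_or_ne q 0 with rfl | hq0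
  · norm_num [GG, HH, qp]
  have hn : ∀ n : ℕ, n ≠ 0 → ‖q ^ n‖ < 1 := fun n h0 => by
    rw [norm_pow]; exact pow_lt_one₀ (norm_nonneg _) hq h0
  have h5 := hn 5 (by norm_num)
  have hp := hn 10 (by norm_num)
  have hp0 : q ^ 10 ≠ 0 := pow_ne_zero _ hq0
  have hne : ∀ n : ℕ, n ≠ 0 → qp (q ^ n) (q ^ 10) ≠ 0 := fun n h0 => qp_ne_zero hp (hn n h0)
  have hdiv : ∀ m n : ℕ, n ≤ m → q ^ m / q ^ n = q ^ (m - n) := fun m n h =>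
    (pow_sub₀ q hq0 h ▸ div_eq_mul_inv _ _)
  have htheta : ∀ n : ℕ, n ≤ 10 →
      theta (q ^ 10) (q ^ n) = qp (q ^ n) (q ^ 10) * qp (q ^ (10 - n)) (q ^ 10) := fun n h => by
    rw [theta, hdiv _ _ h]
  have hrefl : ∀ n : ℕ, n ≤ 10 → theta (q ^ 10) (q ^ (10 - n)) = theta (q ^ 10) (q ^ n) :=
    fun n h => by rw [← hdiv _ _ h, theta_reflect hp0]
  have hrel : ∀ a b : ℕ, b ≤ a → a ≤ 4 →
      q ^ b * (theta (q ^ 10) (q ^ (a + b)) * theta (q ^ 10) (q ^ (a - b)) *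
          theta (q ^ 10) (q ^ 4) ^ 2) +
        q ^ a * (theta (q ^ 10) (q ^ (4 + a)) * theta (q ^ 10) (q ^ (4 - a)) *
          theta (q ^ 10) (q ^ b) ^ 2) =
      q ^ b * (theta (q ^ 10) (q ^ a) ^ 2 *
        (theta (q ^ 10) (q ^ (4 + b)) * theta (q ^ 10) (q ^ (4 - b)))) := by
    intro a b hba ha
    have h := theta_three_term hp hp0 (pow_ne_zero a hq0) (pow_ne_zero b hq0) (pow_ne_zero 4 hq0)
    rwa [hdiv _ _ hba, hdiv _ _ ha, hdiv _ _ (hba.trans ha), ← pow_add, ← pow_add,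
      ← pow_add] at h
  -- the three relations, with exponents above 5 then folded back by `i ↦ 10 - i`
  have r21 := hrel 2 1 (by norm_num) (by norm_num)
  have r32 := hrel 3 2 (by norm_num) (by norm_num)
  have r31 := hrel 3 1 (by norm_num) (by norm_num)
  have s6 : theta (q ^ 10) (q ^ 6) = theta (q ^ 10) (q ^ 4) := hrefl 4 (by norm_num)
  have s7 : theta (q ^ 10) (q ^ 7) = theta (q ^ 10) (q ^ 3) := hrefl 3 (by norm_num)
  norm_num [s6, s7] at r21 r32 r31
  have hmain := modular_relation (q := q) (t1 := theta (q ^ 10) q) (t2 := theta (q ^ 10) (q ^ 2))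
    (t3 := theta (q ^ 10) (q ^ 3)) (t4 := theta (q ^ 10) (q ^ 4)) (t5 := theta (q ^ 10) (q ^ 5))
    (mul_left_cancel₀ hq0 (by linear_combination r21))
    (mul_left_cancel₀ (pow_ne_zero 2 hq0) (by linear_combination r32))
    (mul_left_cancel₀ hq0 (by linear_combination r31))
  have hsplit : ∀ n : ℕ,
      qp (q ^ n) (q ^ 5) = qp (q ^ n) (q ^ 10) * qp (q ^ (n + 5)) (q ^ 10) := fun n => by
    rw [qp_split h5, ← pow_mul, ← pow_add]
  have t1 := htheta 1 (by norm_num)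
  have t2 := htheta 2 (by norm_num)
  have t3 := htheta 3 (by norm_num)
  have t4 := htheta 4 (by norm_num)
  have t5 := htheta 5 (by norm_num)
  have p1 := hsplit 1
  have p2 := hsplit 2
  have p3 := hsplit 3
  have p4 := hsplit 4
  have p5 := hsplit 5
  norm_num at t1 t2 t3 t4 t5 p1 p2 p3 p4 p5
  have hG : GG q = 1 / (theta (q ^ 10) q * theta (q ^ 10) (q ^ 4)) := by
    rw [GG, p1, p4, t1, t4]; ring
  have hH : HH q = 1 / (theta (q ^ 10) (q ^ 2) * theta (q ^ 10) (q ^ 3)) := by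
    rw [HH, p2, p3, t2, t3]; ring
  have hG2 : GG (q ^ 2) = 1 / theta (q ^ 10) (q ^ 2) := by
    rw [GG, t2, ← pow_mul, ← pow_mul]
  have hH2 : HH (q ^ 2) = 1 / theta (q ^ 10) (q ^ 4) := by
    rw [HH, t4, ← pow_mul, ← pow_mul, ← pow_mul]
  have n1 : theta (q ^ 10) q ≠ 0 := by
    rw [t1]; exact mul_ne_zero (by simpa using hne 1 one_ne_zero) (hne 9 (by norm_num))
  have n2 : theta (q ^ 10) (q ^ 2) ≠ 0 := by
    rw [t2]; exact mul_ne_zero (hne 2 (by norm_num)) (hne 8 (by norm_num))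
  have n3 : theta (q ^ 10) (q ^ 3) ≠ 0 := by
    rw [t3]; exact mul_ne_zero (hne 3 (by norm_num)) (hne 7 (by norm_num))
  have n4 : theta (q ^ 10) (q ^ 4) ≠ 0 := by
    rw [t4]; exact mul_ne_zero (hne 4 (by norm_num)) (hne 6 (by norm_num))
  have n5 : qp (q ^ 5) (q ^ 10) ≠ 0 := hne 5 (by norm_num)
  have n10 : qp (q ^ 10) (q ^ 10) ≠ 0 := hne 10 (by norm_num)
  rw [t5] at hmain
  rw [hG, hH, hG2, hH2, p5]
  generalize theta (q ^ 10) q = x1 at *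
  generalize theta (q ^ 10) (q ^ 2) = x2 at *
  generalize theta (q ^ 10) (q ^ 3) = x3 at *
  generalize theta (q ^ 10) (q ^ 4) = x4 at *
  generalize qp (q ^ 5) (q ^ 10) = e at *
  generalize qp (q ^ 10) (q ^ 10) = f at *
  field_simp
  linear_combination hmain
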